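/- Let G be a finite simple graph with no isolated vertices and let Γ_fec be the set of fractional edge covers of G. If γ is an extreme point of Γ_fec, then every connected component of the subgraph H with edge set supp(γ) that contains no pendant edge of H is a cycle of odd length. -/

import Mathlib

open Finset

noncomputable section
open scoped Classical

variable {V : Type*}

/-- The set of admissible densities for a family `Γ` of objects on the edge set of `G`.
Densities are elements of `ℝ^E_{≥0}`, modeled as nonnegative functions on `Sym2 V`
vanishing outside the edge set of `G`. `ρ` is admissible if `ℓ_ρ(γ) ≥ 1` for all `γ ∈ Γ`. -/
def Adm [Fintype V] [DecidableEq V] (G : SimpleGraph V) (Γ : Set (Sym2 V → ℝ)) :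
    Set (Sym2 V → ℝ) :=
  {ρ | (∀ e, 0 ≤ ρ e) ∧ (∀ e ∉ G.edgeSet, ρ e = 0) ∧
    ∀ γ ∈ Γ, 1 ≤ ∑ e ∈ G.edgeFinset, γ e * ρ e}

/-- The `p`-energy of a density `ρ` with edge weights `σ`: `Σ_e σ(e) ρ(e)^p`. -/
def energy [Fintype V] [DecidableEq V] (p : ℝ) (σ : Sym2 V → ℝ) (G : SimpleGraph V)
    (ρ : Sym2 V → ℝ) : ℝ :=
  ∑ e ∈ G.edgeFinset, σ e * ρ e ^ p

/-- The `p`-modulus of a family `Γ` with edge weights `σ`: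
the infimum of the `p`-energy over admissible densities. -/
def Modulus [Fintype V] [DecidableEq V] (p : ℝ) (σ : Sym2 V → ℝ) (G : SimpleGraph V)
    (Γ : Set (Sym2 V → ℝ)) : ℝ :=
  sInf (energy p σ G '' Adm G Γ)

/-- The unweighted 2-energy `Σ_e ρ(e)²`. -/
def energy2 [Fintype V] [DecidableEq V] (G : SimpleGraph V) (ρ : Sym2 V → ℝ) : ℝ :=
  ∑ e ∈ G.edgeFinset, ρ e ^ 2

/-- The unweighted 2-modulus. -/
def Mod2 [Fintype V] [DecidableEq V] (G : SimpleGraph V) (Γ : Set (Sym2 V → ℝ)) : ℝ :=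
  sInf (energy2 G '' Adm G Γ)

/-- `C` is an edge cover of `G`: a set of edges of `G` meeting every vertex. -/
def IsEdgeCover [Fintype V] [DecidableEq V] (G : SimpleGraph V) (C : Finset (Sym2 V)) : Prop :=
  ↑C ⊆ G.edgeSet ∧ ∀ v : V, ∃ e ∈ C, v ∈ e

/-- The family `Γ_ec` of indicator vectors of edge covers of `G`. -/
def Γec [Fintype V] [DecidableEq V] (G : SimpleGraph V) : Set (Sym2 V → ℝ) :=
  {γ | ∃ C : Finset (Sym2 V), IsEdgeCover G C ∧ γ = fun e => if e ∈ C then 1 else 0}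

/-- The family `Γ_fec` of fractional edge covers of `G`: nonnegative vectors on the edge
set with `Σ_{e ∈ δ(v)} γ(e) ≥ 1` at every vertex `v`. -/
def Γfec [Fintype V] [DecidableEq V] (G : SimpleGraph V) : Set (Sym2 V → ℝ) :=
  {γ | (∀ e, 0 ≤ γ e) ∧ (∀ e ∉ G.edgeSet, γ e = 0) ∧
    ∀ v : V, 1 ≤ ∑ e ∈ G.incidenceFinset v, γ e}

/-- The family `Γ_star` of indicator vectors of the stars `δ(v)`, `v ∈ V`. -/
def Γstar [Fintype V] [DecidableEq V] (G : SimpleGraph V) : Set (Sym2 V → ℝ) :=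
  {γ | ∃ v : V, γ = fun e => if e ∈ G.incidenceFinset v then 1 else 0}

/-- The subgraph of `G` whose edge set is the support `{e : γ(e) > 0}` of `γ`. -/
def suppGraph (G : SimpleGraph V) (γ : Sym2 V → ℝ) : SimpleGraph V where
  Adj u v := G.Adj u v ∧ 0 < γ s(u, v)
  symm := by
    refine ⟨?_⟩
    intro u v h
    refine ⟨h.1.symm, ?_⟩
    rw [Sym2.eq_swap]
    exact h.2
  loopless := ⟨fun v h => G.loopless.irrefl v h.1⟩

/-- The part of `H` in the component of `w`. -/
def compGraph (H : SimpleGraph V) (w : V) : SimpleGraph V where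
  Adj x y := H.Adj x y ∧ H.Reachable w x
  symm := by
    refine ⟨?_⟩
    intro u v h
    exact ⟨h.1.symm, h.2.trans h.1.reachable⟩
  loopless := ⟨fun v h => H.loopless.irrefl v h.1⟩

lemma compGraph_le (H : SimpleGraph V) (w : V) : compGraph H w ≤ H := fun _ _ h => h.1

lemma compGraph_neighborSet (H : SimpleGraph V) (w x : V) (hx : H.Reachable w x) :
    (compGraph H w).neighborSet x = H.neighborSet x := by
  ext y
  exact ⟨fun h => h.1, fun h => ⟨h, hx⟩⟩

lemma compGraph_reachable (H : SimpleGraph V) (w x y : V) (p : H.Walk x y)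
    (hx : H.Reachable w x) : (compGraph H w).Reachable x y := by
  induction p with
  | nil => exact SimpleGraph.Reachable.refl _
  | cons h p ih =>
    have h1 : (compGraph H w).Adj _ _ := ⟨h, hx⟩
    exact h1.reachable.trans (ih (hx.trans h.reachable))

lemma suppGraph_edge (G : SimpleGraph V) (γ : Sym2 V → ℝ) (e : Sym2 V)
    (he : e ∈ (suppGraph G γ).edgeSet) : e ∈ G.edgeSet ∧ 0 < γ e := by
  induction e with
  | _ a b => exact he

lemma kernel_zero [Fintype V] [DecidableEq V] (G : SimpleGraph V) (γ : Sym2 V → ℝ)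
    (hγ : γ ∈ (Γfec G).extremePoints ℝ) (x : Sym2 V → ℝ)
    (hs : ∀ e, x e ≠ 0 → e ∈ (suppGraph G γ).edgeSet)
    (hk : ∀ v : V, ∑ e ∈ G.incidenceFinset v, x e = 0) : x = 0 := by
  obtain ⟨hmem, hext⟩ := mem_extremePoints_iff_left.1 hγ
  obtain ⟨h0, hE, hc⟩ := hmem
  have key : ∀ᶠ ε in nhdsWithin (0 : ℝ) (Set.Ioi 0), ∀ e, ε * |x e| ≤ γ e := by
    rw [Filter.eventually_all]
    intro e
    by_cases hx : x e = 0
    · simp [hx, h0 e]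
    · have hp := (suppGraph_edge G γ e (hs e hx)).2
      have ha : 0 < |x e| := abs_pos.2 hx
      filter_upwards [Ioo_mem_nhdsGT (div_pos hp ha)] with ε hε
      exact ((lt_div_iff₀ ha).1 hε.2).le
  obtain ⟨ε, hε, hpos⟩ := (key.and self_mem_nhdsWithin).exists
  have hpos : 0 < ε := hpos
  have feas : ∀ s : ℝ, |s| = ε → (fun e => γ e + s * x e) ∈ Γfec G := by
    intro s hsε
    refine ⟨fun e => ?_, fun e he => ?_, fun v => ?_⟩
    · have h1 := hε e
      rw [← hsε, ← abs_mul] at h1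
      have := neg_abs_le (s * x e)
      simp only
      linarith
    · have : x e = 0 := by
        by_contra hx
        exact he (suppGraph_edge G γ e (hs e hx)).1
      simp [this, hE e he]
    · rw [Finset.sum_add_distrib, ← Finset.mul_sum, hk v]
      simpa using hc v
  have h1 := hext _ (feas ε (abs_of_pos hpos)) _ (feas (-ε) (by rw [abs_neg, abs_of_pos hpos]))
    ⟨1/2, 1/2, by norm_num, by norm_num, by norm_num, by
      ext e
      simp only [Pi.add_apply, Pi.smul_apply, smul_eq_mul]
      ring⟩
  ext e
  have h2 := congrFun h1 e
  have h3 : ε * x e = 0 := by linarith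
  simpa [hpos.ne'] using h3

lemma no_even_closed [Fintype V] [DecidableEq V] (G : SimpleGraph V) (γ : Sym2 V → ℝ)
    (hγ : γ ∈ (Γfec G).extremePoints ℝ) (w : V) (c : (suppGraph G γ).Walk w w)
    (hc : c.edges.Nodup) (hl : 0 < c.length) : Odd c.length := by
  by_contra hodd
  have heven : Even c.length := Nat.not_odd_iff_even.1 hodd
  set x : Sym2 V → ℝ := fun e => ∑ i ∈ Finset.range c.length,
    (-1 : ℝ) ^ i * (if e = s(c.getVert i, c.getVert (i + 1)) then 1 else 0) with hx
  have hadj : ∀ i ∈ Finset.range c.length,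
      (suppGraph G γ).Adj (c.getVert i) (c.getVert (i + 1)) := fun i hi =>
    c.adj_getVert_succ (Finset.mem_range.1 hi)
  have hz : x = 0 := by
    apply kernel_zero G γ hγ
    · intro e he
      obtain ⟨i, hi, hne⟩ := Finset.exists_ne_zero_of_sum_ne_zero he
      have : e = s(c.getVert i, c.getVert (i + 1)) := by
        by_contra h
        simp [h] at hne
      rw [this]
      exact hadj i hi
    · intro v
      rw [hx, Finset.sum_comm]
      have : ∀ i ∈ Finset.range c.length,
          ∑ e ∈ G.incidenceFinset v, (-1 : ℝ) ^ i *
            (if e = s(c.getVert i, c.getVert (i + 1)) then 1 else 0) =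
          (-1 : ℝ) ^ i * (if v = c.getVert i then 1 else 0) -
          (-1 : ℝ) ^ (i + 1) * (if v = c.getVert (i + 1) then 1 else 0) := by
        intro i hi
        have ha := (hadj i hi).1
        rw [← Finset.mul_sum, Finset.sum_ite_eq']
        have hm : s(c.getVert i, c.getVert (i + 1)) ∈ G.incidenceFinset v ↔
            (v = c.getVert i ∨ v = c.getVert (i + 1)) := by
          rw [SimpleGraph.mem_incidenceFinset, SimpleGraph.mk'_mem_incidenceSet_iff]
          simp [ha]
        have hne := ha.ne
        simp only [hm, pow_succ]
        by_cases h1 : v = c.getVert i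
        · have h2 : v ≠ c.getVert (i + 1) := fun h => hne (h1.symm.trans h)
          simp only [if_pos h1, if_neg h2, if_pos (Or.inl h1)]
          ring
        · by_cases h2 : v = c.getVert (i + 1)
          · rw [if_pos (Or.inr h2), if_neg h1, if_pos h2]; ring
          · rw [if_neg (by tauto), if_neg h1, if_neg h2]; ring
      rw [Finset.sum_congr rfl this, Finset.sum_range_sub']
      simp [heven.neg_one_pow]
  have h0 := congrFun hz s(c.getVert 0, c.getVert (0 + 1))
  rw [hx] at h0
  simp only [Pi.zero_apply] at h0
  rw [Finset.sum_eq_single 0] at h0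
  · simp at h0
  · intro i hi hi0
    have hi' := Finset.mem_range.1 hi
    rw [if_neg, mul_zero]
    intro heq
    have e0 := SimpleGraph.Walk.getElem_edges (p := c) (i := 0) (by simpa using hl)
    have ei := SimpleGraph.Walk.getElem_edges (p := c) (i := i) (by simpa using hi')
    have := (List.Nodup.getElem_inj_iff hc).1 (e0.trans (heq.trans ei.symm))
    exact hi0 this.symm
  · intro h
    exact absurd (Finset.mem_range.2 hl) h

lemma card_edges_le [Fintype V] [DecidableEq V] (G : SimpleGraph V) (γ : Sym2 V → ℝ)
    (hγ : γ ∈ (Γfec G).extremePoints ℝ) (w : V) :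
    Fintype.card (compGraph (suppGraph G γ) w).edgeSet ≤
      Fintype.card {v // (suppGraph G γ).Reachable w v} := by
  set H' := compGraph (suppGraph G γ) w with hH'
  let ext : (H'.edgeSet → ℝ) → Sym2 V → ℝ := fun x e => if h : e ∈ H'.edgeSet then x ⟨e, h⟩ else 0
  let L : (H'.edgeSet → ℝ) →ₗ[ℝ] ({v // (suppGraph G γ).Reachable w v} → ℝ) :=
    { toFun := fun x v => ∑ e ∈ G.incidenceFinset v.1, ext x e
      map_add' := by
        intro x y
        ext v
        simp only [Pi.add_apply]
        rw [← Finset.sum_add_distrib]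
        refine Finset.sum_congr rfl fun e _ => ?_
        by_cases h : e ∈ H'.edgeSet <;> simp [ext, h]
      map_smul' := by
        intro a x
        ext v
        simp only [Pi.smul_apply, smul_eq_mul, RingHom.id_apply]
        rw [Finset.mul_sum]
        refine Finset.sum_congr rfl fun e _ => ?_
        by_cases h : e ∈ H'.edgeSet <;> simp [ext, h] }
  have hinj : Function.Injective L := by
    rw [← LinearMap.ker_eq_bot, LinearMap.ker_eq_bot']
    intro x hx
    have hz : ext x = 0 := by
      apply kernel_zero G γ hγ
      · intro e he
        have h : e ∈ H'.edgeSet := by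
          by_contra h
          simp [ext, h] at he
        exact SimpleGraph.edgeSet_mono (compGraph_le _ w) h
      · intro v
        by_cases hv : (suppGraph G γ).Reachable w v
        · exact congrFun hx ⟨v, hv⟩
        · refine Finset.sum_eq_zero fun e he => ?_
          have h : e ∉ H'.edgeSet := by
            intro h
            have hve : v ∈ e := ((SimpleGraph.mem_incidenceFinset _ _ _).1 he).2
            obtain ⟨y, rfl⟩ := Sym2.mem_iff_exists.1 hve
            exact hv h.2
          simp [ext, h]
    ext ⟨e, he⟩
    have := congrFun hz e
    simpa [ext, he] using this
  have := LinearMap.finrank_le_finrank_of_injective hinj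
  simpa using this

lemma degree_eq_two [Fintype V] [DecidableEq V] (G : SimpleGraph V) (γ : Sym2 V → ℝ)
    (hγ : γ ∈ (Γfec G).extremePoints ℝ) (w u : V) (hwu : (suppGraph G γ).Adj w u)
    (hdeg : ∀ x : V, (suppGraph G γ).Reachable w x → (suppGraph G γ).degree x ≠ 1) :
    ∀ x, (suppGraph G γ).Reachable w x →
      ((compGraph (suppGraph G γ) w).neighborSet x).ncard = 2 := by
  have hle := card_edges_le G γ hγ w
  set H := suppGraph G γ with hH
  set H' := compGraph H w with hH'
  have hnc : ∀ x, (H'.neighborSet x).ncard = H'.degree x := by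
    intro x
    rw [Set.ncard_eq_toFinset_card', ← SimpleGraph.card_neighborFinset_eq_degree]
    congr
  have hnc2 : ∀ x, (H.neighborSet x).ncard = H.degree x := by
    intro x
    rw [Set.ncard_eq_toFinset_card', ← SimpleGraph.card_neighborFinset_eq_degree]
    congr
  have hge : ∀ x, H.Reachable w x → 2 ≤ H'.degree x := by
    intro x hx
    have h1 : H'.degree x = H.degree x := by
      rw [← hnc, ← hnc2, hH', compGraph_neighborSet _ _ _ hx]
    have h2 := hdeg x hx
    have h3 : 0 < H.degree x := by
      rw [SimpleGraph.degree_pos_iff_exists_adj]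
      obtain ⟨p⟩ := hx.symm
      cases p with
      | nil => exact ⟨u, hwu⟩
      | cons h _ => exact ⟨_, h⟩
    omega
  have hsum := H'.sum_degrees_eq_twice_card_edges
  have hcard : H'.edgeFinset.card = Fintype.card H'.edgeSet := by
    rw [SimpleGraph.edgeFinset_card]
  intro x hx
  rw [hnc]
  by_contra hne
  have hgt : 2 < H'.degree x := lt_of_le_of_ne (hge x hx) (Ne.symm hne)
  have h1 : ∑ v ∈ Finset.univ.filter (fun v => H.Reachable w v), 2 <
      ∑ v ∈ Finset.univ.filter (fun v => H.Reachable w v), H'.degree v :=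
    Finset.sum_lt_sum (fun v hv => hge v (Finset.mem_filter.1 hv).2)
      ⟨x, Finset.mem_filter.2 ⟨Finset.mem_univ _, hx⟩, hgt⟩
  have h2 : ∑ v ∈ Finset.univ.filter (fun v => H.Reachable w v), H'.degree v ≤
      ∑ v, H'.degree v :=
    Finset.sum_le_sum_of_subset (Finset.filter_subset _ _)
  have h3 : Fintype.card {v // H.Reachable w v} =
      (Finset.univ.filter (fun v => H.Reachable w v)).card := by
    rw [Fintype.card_subtype]
  rw [Finset.sum_const, smul_eq_mul] at h1
  omega

/-- If `γ` is an extreme point of the set of fractional edge covers, then every connected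
component of the support graph `H` that contains an edge but no pendant edge (no vertex
of `H`-degree 1) is a cycle of odd length. -/
theorem extremePoint_nonpendant_component_oddCycle [Fintype V] [DecidableEq V]
    (G : SimpleGraph V) (hiso : ∀ v : V, ∃ u, G.Adj v u) (γ : Sym2 V → ℝ)
    (hγ : γ ∈ (Γfec G).extremePoints ℝ) :
    ∀ w u : V, (suppGraph G γ).Adj w u →
      (∀ x : V, (suppGraph G γ).Reachable w x → (suppGraph G γ).degree x ≠ 1) →
      ∃ c : (suppGraph G γ).Walk w w, c.IsCycle ∧ Odd c.length ∧
        ∀ x y : V, (suppGraph G γ).Adj x y → (suppGraph G γ).Reachable w x →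
          s(x, y) ∈ c.edges := by
  intro w u hwu hdeg
  have h2 := degree_eq_two G γ hγ w u hwu hdeg
  have hcyc : (compGraph (suppGraph G γ) w).IsCycles := by
    intro v ⟨y, hy⟩
    exact h2 v hy.2
  obtain ⟨p, hp, hv⟩ := hcyc.exists_cycle_toSubgraph_verts_eq_connectedComponentSupp
    (v := w) (c := (compGraph (suppGraph G γ) w).connectedComponentMk w) rfl
    ⟨u, hwu, SimpleGraph.Reachable.refl _⟩
  have hc : (p.mapLe (compGraph_le _ w)).IsCycle := hp.mapLe _
  refine ⟨p.mapLe (compGraph_le _ w), hc, ?_, ?_⟩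
  · have := hc.three_le_length
    exact no_even_closed G γ hγ w _ hc.edges_nodup (by omega)
  · intro x y hxy hx
    have hx' : x ∈ p.toSubgraph.verts := by
      rw [hv]
      obtain ⟨q⟩ := hx
      exact SimpleGraph.ConnectedComponent.sound
        (compGraph_reachable _ w _ _ q (SimpleGraph.Reachable.refl _)).symm
    have h3 : p.toSubgraph.Adj x y :=
      (hp.adj_toSubgraph_iff_of_isCycles hcyc hx' y).2 ⟨hxy, hx⟩
    rw [SimpleGraph.Walk.edges_mapLe_eq_edges]
    exact SimpleGraph.Walk.adj_toSubgraph_iff_mem_edges.1 h3
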